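/- Fix an integer T ≥ 1, a nonempty set S ⊆ {1,…,T} with s_min := min S, constants R_θ > 0, ρ ∈ (0,1), p₀ ∈ (0, 1/2], and θ*_0, θ*_1 ∈ ℝ^d with ‖θ*_a‖₂ ≤ R_θ. For each t ∈ {1,…,T} let x_t, ε_t ∈ ℝ^d with ‖x_t‖₂ ≤ 1, x̃_t := x_t + ε_t, ‖x̃_t‖₂ ≤ 1, and |⟨θ*_1 − θ*_0, ε_t⟩| ≤ ρ·|⟨θ*_1 − θ*_0, x_t⟩|. For each s ∈ S let θ̂_0^{(s)}, θ̂_1^{(s)} ∈ ℝ^d be arbitrary. For t ≤ s_min let π_t(0), π_t(1) ≥ p₀ be arbitrary with π_t(0)+π_t(1)=1; for t > s_min let s_t := max{s ∈ S : s < t}, let ã_t ∈ argmax_{a∈{0,1}} ⟨θ̂_a^{(s_t)}, x̃_t⟩, and set π_t(ã_t) = 1 − p₀, π_t(1−ã_t) = p₀. Let a*_t ∈ argmax_{a∈{0,1}} ⟨θ*_a, x_t⟩ and define the clipped benchmark π̄*_t(a*_t) = 1 − p₀, π̄*_t(1−a*_t) = p₀. Then for every T₀ with s_min ≤ T₀ <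 T, Σ_{t=1}^T [Σ_a π̄*_t(a)·⟨θ*_a, x_t⟩ − Σ_a π_t(a)·⟨θ*_a, x_t⟩] ≤ 2·T₀·R_θ + (2·(1−2p₀)/(1−ρ))·Σ_{t=T₀+1}^T max_{a∈{0,1}} ‖θ̂_a^{(s_t)} − θ*_a‖₂. -/

import Mathlib

open RealInnerProductSpace Finset

/-!
A round costs at most `2 * R`, because all rewards lie in `[-R, R]`; this pays for the first `T₀`
rounds. In a later round both the learner and the benchmark play clipped policies, whose values
differ by `1 - 2 * p₀` times the reward gap `D` between their preferred arms. The noise condition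
keeps a `1 - ρ` fraction of `D` visible at the noisy context, while the learner's estimates rank
the two arms the other way there, so `(1 - ρ) * D` is at most the sum of two estimation errors.
With `K` arms the same argument works, the factor `1 - 2 * p₀` becoming `1 - K * p₀`.
-/

section Reward

variable {E : Type*} [NormedAddCommGroup E] [InnerProductSpace ℝ E]

theorem abs_real_inner_le_of_norm_le_one {v z : E} {R : ℝ} (hv : ‖v‖ ≤ R) (hz : ‖z‖ ≤ 1) :
    |⟪v, z⟫| ≤ R :=
  (abs_real_inner_le_norm v z).trans <| (mul_le_of_le_one_right (norm_nonneg v) hz).trans hv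

theorem one_sub_mul_inner_le_inner_add {v x e : E} {ρ : ℝ} (hv : 0 ≤ ⟪v, x⟫)
    (he : |⟪v, e⟫| ≤ ρ * |⟪v, x⟫|) : (1 - ρ) * ⟪v, x⟫ ≤ ⟪v, x + e⟫ := by
  rw [abs_of_nonneg hv] at he
  rw [inner_add_right]
  linarith [neg_le_of_abs_le he]

theorem inner_sub_le_of_estimates_inner_le {θa θb ηa ηb z : E} {δ : ℝ} (ha : ‖ηa - θa‖ ≤ δ)
    (hb : ‖ηb - θb‖ ≤ δ) (hz : ‖z‖ ≤ 1) (hab : ⟪ηa, z⟫ ≤ ⟪ηb, z⟫) :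
    ⟪θa - θb, z⟫ ≤ 2 * δ := by
  have herr_a := neg_le_of_abs_le (abs_real_inner_le_of_norm_le_one ha hz)
  have herr_b := le_of_abs_le (abs_real_inner_le_of_norm_le_one hb hz)
  rw [inner_sub_left] at herr_a herr_b ⊢
  linarith

theorem reward_gap_le_of_greedy {θa θb ηa ηb x e : E} {ρ δ : ℝ} (hρ : ρ < 1)
    (ha : ‖ηa - θa‖ ≤ δ) (hb : ‖ηb - θb‖ ≤ δ) (hxe : ‖x + e‖ ≤ 1)
    (he : |⟪θa - θb, e⟫| ≤ ρ * |⟪θa - θb, x⟫|) (hgreedy : ⟪ηa, x + e⟫ ≤ ⟪ηb, x + e⟫)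
    (hbest : ⟪θb, x⟫ ≤ ⟪θa, x⟫) : ⟪θa, x⟫ - ⟪θb, x⟫ ≤ 2 * δ / (1 - ρ) := by
  have hgap : 0 ≤ ⟪θa - θb, x⟫ := by rwa [inner_sub_left, sub_nonneg]
  rw [← inner_sub_left, le_div_iff₀' (sub_pos.2 hρ)]
  exact (one_sub_mul_inner_le_inner_add hgap he).trans
    (inner_sub_le_of_estimates_inner_le ha hb hxe hgreedy)

end Reward

section Policy

variable {ι : Type*} [Fintype ι]

theorem abs_dotProduct_le_of_mem_stdSimplex {q u : ι → ℝ} {R : ℝ} (hq : q ∈ stdSimplex ℝ ι)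
    (hu : ∀ a, |u a| ≤ R) : |q ⬝ᵥ u| ≤ R :=
  abs_le.2 <| (convex_Icc (-R) R).sum_mem (fun a _ => hq.1 a) hq.2 fun a _ => abs_le.1 (hu a)

variable [DecidableEq ι]

/-- The clipped policy preferring the arm `b`: every arm has probability `p`, and the remaining
mass is added to `b`. With two arms, `b` has probability `1 - p` and the other arm `p`. -/
def clippedPolicy (p : ℝ) (b : ι) : ι → ℝ :=
  (fun _ => p) + Pi.single b (1 - Fintype.card ι * p)

theorem clippedPolicy_mem_stdSimplex {p : ℝ} (hp : 0 ≤ p) (hcard : Fintype.card ι * p ≤ 1)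
    (b : ι) : clippedPolicy p b ∈ stdSimplex ℝ ι := by
  have hsingle : 0 ≤ Pi.single (M := fun _ => ℝ) b (1 - Fintype.card ι * p) :=
    Pi.single_nonneg.2 (sub_nonneg.2 hcard)
  refine ⟨fun a => add_nonneg hp (hsingle a), ?_⟩
  simp [clippedPolicy, sum_add_distrib]

theorem clippedPolicy_dotProduct_sub (p : ℝ) (a b : ι) (u : ι → ℝ) :
    clippedPolicy p a ⬝ᵥ u - clippedPolicy p b ⬝ᵥ u = (1 - Fintype.card ι * p) * (u a - u b) := by
  simp only [clippedPolicy, add_dotProduct, single_dotProduct]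
  ring

end Policy

section Regret

variable {ι E : Type*} [Fintype ι] [NormedAddCommGroup E] [InnerProductSpace ℝ E]

theorem policy_regret_le_two_mul {q q' : ι → ℝ} {θ : ι → E} {x : E} {R : ℝ}
    (hq : q ∈ stdSimplex ℝ ι) (hq' : q' ∈ stdSimplex ℝ ι) (hθ : ∀ a, ‖θ a‖ ≤ R)
    (hx : ‖x‖ ≤ 1) : (q ⬝ᵥ fun a => ⟪θ a, x⟫) - (q' ⬝ᵥ fun a => ⟪θ a, x⟫) ≤ 2 * R := by
  have hu (a : ι) : |⟪θ a, x⟫| ≤ R := abs_real_inner_le_of_norm_le_one (hθ a) hx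
  linarith [le_of_abs_le (abs_dotProduct_le_of_mem_stdSimplex hq hu),
    neg_le_of_abs_le (abs_dotProduct_le_of_mem_stdSimplex hq' hu)]

theorem clippedPolicy_regret_le_of_greedy [DecidableEq ι] {p ρ : ℝ}
    (hcard : Fintype.card ι * p ≤ 1) (hρ : ρ < 1) {θ η : ι → E} {x e : E} {a b : ι}
    (hxe : ‖x + e‖ ≤ 1) (he : |⟪θ a - θ b, e⟫| ≤ ρ * |⟪θ a - θ b, x⟫|)
    (hgreedy : ⟪η a, x + e⟫ ≤ ⟪η b, x + e⟫) (hbest : ⟪θ b, x⟫ ≤ ⟪θ a, x⟫) :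
    (clippedPolicy p a ⬝ᵥ fun c => ⟪θ c, x⟫) - (clippedPolicy p b ⬝ᵥ fun c => ⟪θ c, x⟫)
      ≤ 2 * (1 - Fintype.card ι * p) / (1 - ρ) * ‖η - θ‖ := by
  have hgap : ⟪θ a, x⟫ - ⟪θ b, x⟫ ≤ 2 * ‖η - θ‖ / (1 - ρ) :=
    reward_gap_le_of_greedy hρ (norm_le_pi_norm (η - θ) a) (norm_le_pi_norm (η - θ) b) hxe he
      hgreedy hbest
  calc (clippedPolicy p a ⬝ᵥ fun c => ⟪θ c, x⟫) - (clippedPolicy p b ⬝ᵥ fun c => ⟪θ c, x⟫)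
      = (1 - Fintype.card ι * p) * (⟪θ a, x⟫ - ⟪θ b, x⟫) := clippedPolicy_dotProduct_sub ..
    _ ≤ (1 - Fintype.card ι * p) * (2 * ‖η - θ‖ / (1 - ρ)) :=
        mul_le_mul_of_nonneg_left hgap (sub_nonneg.2 hcard)
    _ = 2 * (1 - Fintype.card ι * p) / (1 - ρ) * ‖η - θ‖ := by ring

end Regret

theorem sum_Icc_one_le_of_le_of_le {T₀ T : ℕ} (hT₀ : T₀ ≤ T) {f g : ℕ → ℝ} {c k : ℝ}
    (hhead : ∀ t ∈ Icc 1 T₀, f t ≤ c) (htail : ∀ t ∈ Icc (T₀ + 1) T, f t ≤ k * g t) :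
    ∑ t ∈ Icc 1 T, f t ≤ T₀ * c + k * ∑ t ∈ Icc (T₀ + 1) T, g t := by
  have hsplit : ∑ t ∈ Icc 1 T, f t = ∑ t ∈ Icc 1 T₀, f t + ∑ t ∈ Icc (T₀ + 1) T, f t := by
    simpa only [← Icc_add_one_left_eq_Ioc, zero_add] using
      (sum_Ioc_consecutive f T₀.zero_le hT₀).symm
  rw [hsplit, mul_sum]
  refine add_le_add ?_ (sum_le_sum htail)
  simpa only [Nat.card_Icc, Nat.add_sub_cancel, nsmul_eq_mul] using sum_le_card_nsmul _ _ _ hhead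

theorem stmt10_general {ι E : Type*} [Fintype ι] [DecidableEq ι] [NormedAddCommGroup E]
    [InnerProductSpace ℝ E] {s₀ T₀ T : ℕ} (hs₀ : s₀ ≤ T₀) (hT₀ : T₀ ≤ T) {R ρ p : ℝ}
    (hρ : ρ < 1) (hp : 0 ≤ p) (hcard : Fintype.card ι * p ≤ 1)
    {θ : ι → E} (hθ : ∀ a, ‖θ a‖ ≤ R) {x ε : ℕ → E}
    (hx : ∀ t ∈ Icc 1 T, ‖x t‖ ≤ 1) (hxε : ∀ t ∈ Icc 1 T, ‖x t + ε t‖ ≤ 1)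
    (hε : ∀ t ∈ Icc 1 T, ∀ a b, |⟪θ a - θ b, ε t⟫| ≤ ρ * |⟪θ a - θ b, x t⟫|)
    {η : ℕ → ι → E} {π : ℕ → ι → ℝ} (hwarm : ∀ t ∈ Icc 1 s₀, π t ∈ stdSimplex ℝ ι)
    {greedy best : ℕ → ι}
    (hgreedy : ∀ t ∈ Icc (s₀ + 1) T, ∀ a, ⟪η t a, x t + ε t⟫ ≤ ⟪η t (greedy t), x t + ε t⟫)
    (hπ : ∀ t ∈ Icc (s₀ + 1) T, π t = clippedPolicy p (greedy t))
    (hbest : ∀ t ∈ Icc 1 T, ∀ a, ⟪θ a, x t⟫ ≤ ⟪θ (best t), x t⟫) :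
    ∑ t ∈ Icc 1 T, ((clippedPolicy p (best t) ⬝ᵥ fun a => ⟪θ a, x t⟫)
        - (π t ⬝ᵥ fun a => ⟪θ a, x t⟫))
      ≤ 2 * T₀ * R + 2 * (1 - Fintype.card ι * p) / (1 - ρ) *
          ∑ t ∈ Icc (T₀ + 1) T, ‖η t - θ‖ := by
  have hsimplex (t : ℕ) (ht : t ∈ Icc 1 T) : π t ∈ stdSimplex ℝ ι := by
    obtain ⟨h1t, htT⟩ := mem_Icc.1 ht
    rcases le_or_gt t s₀ with hle | hlt
    · exact hwarm t (mem_Icc.2 ⟨h1t, hle⟩)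
    · rw [hπ t (mem_Icc.2 ⟨hlt, htT⟩)]
      exact clippedPolicy_mem_stdSimplex hp hcard _
  rw [mul_comm 2 (T₀ : ℝ), mul_assoc (T₀ : ℝ)]
  refine sum_Icc_one_le_of_le_of_le hT₀ (fun t ht => ?_) (fun t ht => ?_)
  · have ht' : t ∈ Icc 1 T := Icc_subset_Icc_right hT₀ ht
    exact policy_regret_le_two_mul (clippedPolicy_mem_stdSimplex hp hcard _) (hsimplex t ht') hθ
      (hx t ht')
  · have ht' : t ∈ Icc 1 T := Icc_subset_Icc_left (by lia) ht
    have htgreedy : t ∈ Icc (s₀ + 1) T := Icc_subset_Icc_left (by lia) ht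
    rw [hπ t htgreedy]
    exact clippedPolicy_regret_le_of_greedy hcard hρ (hxε t ht') (hε t ht' _ _)
      (hgreedy t htgreedy _) (hbest t ht' _)

section TwoArms

theorem clippedPolicy_fin_two_self (p : ℝ) (b : Fin 2) : clippedPolicy p b b = 1 - p := by
  simp only [clippedPolicy, Pi.add_apply, Pi.single_eq_same, Fintype.card_fin, Nat.cast_ofNat]
  ring

theorem clippedPolicy_fin_two_one_sub (p : ℝ) (b : Fin 2) : clippedPolicy p b (1 - b) = p := by
  have hne : 1 - b ≠ b := by lia
  rw [clippedPolicy, Pi.add_apply, Pi.single_eq_of_ne hne, add_zero]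

theorem eq_clippedPolicy_fin_two {q : Fin 2 → ℝ} {p : ℝ} {b : Fin 2} (hb : q b = 1 - p)
    (hb' : q (1 - b) = p) : q = clippedPolicy p b := by
  ext a
  obtain rfl | rfl : a = b ∨ a = 1 - b := by lia
  · rw [hb, clippedPolicy_fin_two_self]
  · rw [hb', clippedPolicy_fin_two_one_sub]

theorem clippedPolicy_fin_two_dotProduct (p : ℝ) (b : Fin 2) (u : Fin 2 → ℝ) :
    clippedPolicy p b ⬝ᵥ u = (1 - p) * u b + p * u (1 - b) := by
  have hsum (q : Fin 2 → ℝ) : q ⬝ᵥ u = q b * u b + q (1 - b) * u (1 - b) := by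
    obtain rfl | rfl : b = 0 ∨ b = 1 := by lia
    · exact Matrix.vec2_dotProduct q u
    · exact (Matrix.vec2_dotProduct q u).trans (add_comm _ _)
  rw [hsum, clippedPolicy_fin_two_self, clippedPolicy_fin_two_one_sub]

theorem pi_norm_fin_two {E : Type*} [SeminormedAddGroup E] (f : Fin 2 → E) :
    ‖f‖ = max ‖f 0‖ ‖f 1‖ :=
  le_antisymm
    ((pi_norm_le_iff_of_nonneg (le_max_of_le_left (norm_nonneg _))).2 <|
      Fin.forall_fin_two.2 ⟨le_max_left _ _, le_max_right _ _⟩)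
    (max_le (norm_le_pi_norm f 0) (norm_le_pi_norm f 1))

theorem forall_abs_inner_sub_le_of_fin_two {E : Type*} [NormedAddCommGroup E]
    [InnerProductSpace ℝ E] {θ : Fin 2 → E} {x e : E} {ρ : ℝ}
    (h : |⟪θ 1 - θ 0, e⟫| ≤ ρ * |⟪θ 1 - θ 0, x⟫|) (a b : Fin 2) :
    |⟪θ a - θ b, e⟫| ≤ ρ * |⟪θ a - θ b, x⟫| := by
  have hswap : |⟪θ 0 - θ 1, e⟫| ≤ ρ * |⟪θ 0 - θ 1, x⟫| := by
    simpa only [← neg_sub (θ 1) (θ 0), inner_neg_left, abs_neg] using h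
  fin_cases a <;> fin_cases b <;> first | assumption | simp

end TwoArms

theorem stmt10 (d : ℕ) (hd : 1 ≤ d) (T : ℕ) (hT : 1 ≤ T)
    (S : Finset ℕ) (hSne : S.Nonempty) (hSsub : ∀ s ∈ S, s ∈ Finset.Icc 1 T)
    (Rθ ρ p₀ : ℝ) (hRθ : 0 < Rθ) (hρ : ρ ∈ Set.Ioo (0:ℝ) 1)
    (hp₀ : p₀ ∈ Set.Ioc (0:ℝ) (1/2))
    (θs : Fin 2 → EuclideanSpace ℝ (Fin d)) (hθ : ∀ a, ‖θs a‖ ≤ Rθ)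
    (x ε : ℕ → EuclideanSpace ℝ (Fin d))
    (hx : ∀ t ∈ Finset.Icc 1 T, ‖x t‖ ≤ 1)
    (hxt : ∀ t ∈ Finset.Icc 1 T, ‖x t + ε t‖ ≤ 1)
    (hε : ∀ t ∈ Finset.Icc 1 T,
      |⟪θs 1 - θs 0, ε t⟫| ≤ ρ * |⟪θs 1 - θs 0, x t⟫|)
    (θh : ℕ → Fin 2 → EuclideanSpace ℝ (Fin d))
    (st : ℕ → ℕ)
    (hst : ∀ t, S.min' hSne < t →
      st t ∈ S ∧ st t < t ∧ ∀ s ∈ S, s < t → s ≤ st t)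
    (π : ℕ → Fin 2 → ℝ)
    (hπwarm : ∀ t ∈ Finset.Icc 1 (S.min' hSne),
      (∀ a, p₀ ≤ π t a) ∧ π t 0 + π t 1 = 1)
    (atil : ℕ → Fin 2)
    (hgreedy : ∀ t ∈ Finset.Icc (S.min' hSne + 1) T,
      ∀ a, ⟪θh (st t) a, x t + ε t⟫ ≤ ⟪θh (st t) (atil t), x t + ε t⟫)
    (hπgreedy : ∀ t ∈ Finset.Icc (S.min' hSne + 1) T,
      π t (atil t) = 1 - p₀ ∧ π t (1 - atil t) = p₀)
    (astar : ℕ → Fin 2)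
    (hastar : ∀ t ∈ Finset.Icc 1 T, ∀ a, ⟪θs a, x t⟫ ≤ ⟪θs (astar t), x t⟫) :
    ∀ T₀ : ℕ, S.min' hSne ≤ T₀ → T₀ < T →
      ∑ t ∈ Finset.Icc 1 T,
          (((1 - p₀) * ⟪θs (astar t), x t⟫ + p₀ * ⟪θs (1 - astar t), x t⟫)
            - (π t 0 * ⟪θs 0, x t⟫ + π t 1 * ⟪θs 1, x t⟫))
        ≤ 2 * T₀ * Rθ + (2 * (1 - 2 * p₀) / (1 - ρ)) *
            ∑ t ∈ Finset.Icc (T₀+1) T,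
              max ‖θh (st t) 0 - θs 0‖ ‖θh (st t) 1 - θs 1‖ := by
  intro T₀ hmin hT₀
  have hcard : (Fintype.card (Fin 2) : ℝ) * p₀ ≤ 1 := by
    rw [Fintype.card_fin, Nat.cast_ofNat]
    linarith [hp₀.2]
  simpa only [clippedPolicy_fin_two_dotProduct, fun t => Matrix.vec2_dotProduct (π t),
    pi_norm_fin_two, Pi.sub_apply, Fintype.card_fin, Nat.cast_ofNat] using
    stmt10_general (η := fun t => θh (st t)) hmin hT₀.le hρ.2 hp₀.1.le hcard hθ hx hxt
      (fun t ht => forall_abs_inner_sub_le_of_fin_two (hε t ht))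
      (fun t ht => ⟨fun a => hp₀.1.le.trans ((hπwarm t ht).1 a),
        (Fin.sum_univ_two (π t)).trans (hπwarm t ht).2⟩)
      hgreedy (fun t ht => eq_clippedPolicy_fin_two (hπgreedy t ht).1 (hπgreedy t ht).2) hastar
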